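/- Let q be a natural number with q ≥ 5 and q ≡ 1 (mod 4), and let m be a natural number with 1 ≤ m ≤ q. Then there exist natural numbers α and β such that 4m = α·q + β·(q+1) if and only if m = (q+1)/2, or m = (3q+1)/4, or m = q. -/

import Mathlib

/-!
Write `q = d * t + 1`. Since `q ≡ 1` and `q + 1 ≡ 2` modulo `d`, a sum `α * q + β * (q + 1)` is a
multiple of `d` exactly when `α + 2 * β = d * c` for some `c`, and dividing by `d` then leaves
`(α + β) * t + c`. In the range `0 < m ≤ q` only `c = 1` survives: `c = 0` forces `m = 0`, and
`c ≥ 2` forces `m ≥ q + 1`.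
-/

theorem exists_mul_eq_mul_add_mul_succ_iff {d t q m : ℕ} (hd : 0 < d) (hq : q = d * t + 1) :
    (∃ α β : ℕ, d * m = α * q + β * (q + 1)) ↔
      ∃ k c : ℕ, k ≤ d * c ∧ d * c ≤ 2 * k ∧ m = k * t + c := by
  subst hq
  constructor
  · rintro ⟨α, β, h⟩
    have h_split : d * m = d * ((α + β) * t) + (α + 2 * β) := by rw [h]; ring
    obtain ⟨c, hc⟩ : d ∣ α + 2 * β :=
      (Nat.dvd_add_right (Dvd.intro _ rfl)).mp (h_split ▸ Dvd.intro m rfl)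
    refine ⟨α + β, c, by omega, by omega, Nat.eq_of_mul_eq_mul_left hd ?_⟩
    rw [h_split, hc, mul_add]
  · rintro ⟨k, c, hk, hc, rfl⟩
    -- The solution of `α + β = k`, `α + 2 * β = d * c`.
    obtain ⟨α, hα⟩ := Nat.exists_eq_add_of_le hc
    obtain ⟨β, hβ⟩ := Nat.exists_eq_add_of_le hk
    obtain rfl : k = α + β := by omega
    exact ⟨α, β, by linear_combination hβ⟩

theorem eq_one_of_mul_add_le {d t k c : ℕ} (hk : k ≤ d * c) (hc : d * c ≤ 2 * k)
    (hpos : 0 < k * t + c) (hle : k * t + c ≤ d * t + 1) : c = 1 := by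
  have h_ne_zero : c ≠ 0 := by
    rintro rfl
    obtain rfl : k = 0 := by simpa using hk
    simp at hpos
  have h_lt_two : c < 2 := by
    by_contra! h_two
    have : 2 * (d * t + 2) ≤ 2 * (k * t + c) :=
      calc 2 * (d * t + 2) ≤ c * (d * t + 2) := by gcongr
        _ = d * c * t + 2 * c := by ring
        _ ≤ 2 * k * t + 2 * c := by gcongr
        _ = 2 * (k * t + c) := by ring
    omega
  omega

theorem stmt_11_general {d t q m : ℕ} (hd : 0 < d) (hq : q = d * t + 1) (hm : 0 < m)
    (hmq : m ≤ q) :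
    (∃ α β : ℕ, d * m = α * q + β * (q + 1)) ↔ ∃ k ≤ d, d ≤ 2 * k ∧ m = k * t + 1 := by
  rw [exists_mul_eq_mul_add_mul_succ_iff hd hq]
  constructor
  · rintro ⟨k, c, hk, hc, rfl⟩
    obtain rfl := eq_one_of_mul_add_le hk hc hm (hq ▸ hmq)
    exact ⟨k, by simpa using hk, by simpa using hc, rfl⟩
  · rintro ⟨k, hk, hdk, rfl⟩
    exact ⟨k, 1, by simpa using hk, by simpa using hdk, rfl⟩

/-- Arithmetic core of Theorem 5.2: for `q ≥ 5`, `q ≡ 1 (mod 4)` and `1 ≤ m ≤ q`,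
`4m` lies in the numerical semigroup generated by `q` and `q+1` if and only if
`m = (q+1)/2`, `m = (3q+1)/4` or `m = q`. -/
theorem stmt_11 (q m : ℕ) (hq5 : 5 ≤ q) (hq : q % 4 = 1) (hm1 : 1 ≤ m) (hmq : m ≤ q) :
    (∃ α β : ℕ, 4 * m = α * q + β * (q + 1)) ↔
      m = (q + 1) / 2 ∨ m = (3 * q + 1) / 4 ∨ m = q := by
  have exists_k_iff (p : ℕ → Prop) : (∃ k ≤ 4, 4 ≤ 2 * k ∧ p k) ↔ p 2 ∨ p 3 ∨ p 4 := by grind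
  rw [stmt_11_general (t := q / 4) four_pos (by omega) hm1 hmq, exists_k_iff]
  omega
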